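/- A Banach algebra A is approximately contractible if and only if it is approximately amenable. -/

import Mathlib

open Filter Topology TensorProduct

noncomputable section


open Filter Topology TensorProduct


/-! Banach bimodules and derivations -/

variable (A : Type) [NonUnitalNormedRing A] [NormedSpace ℂ A]
  [IsScalarTower ℂ A A] [SMulCommClass ℂ A A]

/-- A Banach `A`-bimodule structure on a Banach space `X`: `l a` is the left action of `a`,
`r a` is the right action of `a`. -/
structure BanachBimod (X : Type) [NormedAddCommGroup X] [NormedSpace ℂ X] where
  l : A → X →L[ℂ] X
  r : A → X →L[ℂ] X
  l_add : ∀ a b, l (a + b) = l a + l b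
  l_smul : ∀ (c : ℂ) a, l (c • a) = c • l a
  r_add : ∀ a b, r (a + b) = r a + r b
  r_smul : ∀ (c : ℂ) a, r (c • a) = c • r a
  l_bound : ∃ C : ℝ, ∀ a, ‖l a‖ ≤ C * ‖a‖
  r_bound : ∃ C : ℝ, ∀ a, ‖r a‖ ≤ C * ‖a‖
  l_mul : ∀ a b, l (a * b) = (l a).comp (l b)
  r_mul : ∀ a b, r (a * b) = (r b).comp (r a)
  lr_comm : ∀ a b, (l a).comp (r b) = (r b).comp (l a)

variable {A}

namespace BanachBimod

variable {X : Type} [NormedAddCommGroup X] [NormedSpace ℂ X]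

/-- The dual bimodule structure on `X →L[ℂ] ℂ`. -/
def dual (M : BanachBimod A X) : BanachBimod A (X →L[ℂ] ℂ) where
  l a := (ContinuousLinearMap.compL ℂ X X ℂ).flip (M.r a)
  r a := (ContinuousLinearMap.compL ℂ X X ℂ).flip (M.l a)
  l_add a b := by simp only [M.r_add, map_add]
  l_smul c a := by simp only [M.r_smul, map_smul]
  r_add a b := by simp only [M.l_add, map_add]
  r_smul c a := by simp only [M.l_smul, map_smul]
  l_bound := by
    obtain ⟨C, hC⟩ := M.r_bound
    refine ⟨‖(ContinuousLinearMap.compL ℂ X X ℂ).flip‖ * C, fun a => ?_⟩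
    calc ‖(ContinuousLinearMap.compL ℂ X X ℂ).flip (M.r a)‖
        ≤ ‖(ContinuousLinearMap.compL ℂ X X ℂ).flip‖ * ‖M.r a‖ :=
          (ContinuousLinearMap.compL ℂ X X ℂ).flip.le_opNorm _
      _ ≤ ‖(ContinuousLinearMap.compL ℂ X X ℂ).flip‖ * (C * ‖a‖) := by
          exact mul_le_mul_of_nonneg_left (hC a) (norm_nonneg _)
      _ = ‖(ContinuousLinearMap.compL ℂ X X ℂ).flip‖ * C * ‖a‖ := by ring
  r_bound := by
    obtain ⟨C, hC⟩ := M.l_bound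
    refine ⟨‖(ContinuousLinearMap.compL ℂ X X ℂ).flip‖ * C, fun a => ?_⟩
    calc ‖(ContinuousLinearMap.compL ℂ X X ℂ).flip (M.l a)‖
        ≤ ‖(ContinuousLinearMap.compL ℂ X X ℂ).flip‖ * ‖M.l a‖ :=
          (ContinuousLinearMap.compL ℂ X X ℂ).flip.le_opNorm _
      _ ≤ ‖(ContinuousLinearMap.compL ℂ X X ℂ).flip‖ * (C * ‖a‖) := by
          exact mul_le_mul_of_nonneg_left (hC a) (norm_nonneg _)
      _ = ‖(ContinuousLinearMap.compL ℂ X X ℂ).flip‖ * C * ‖a‖ := by ring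
  l_mul a b := by
    ext φ x
    simp [M.r_mul]
  r_mul a b := by
    ext φ x
    simp [M.l_mul]
  lr_comm a b := by
    ext φ x
    simpa using congrArg φ (congrFun (congrArg DFunLike.coe (M.lr_comm b a)) x)

/-- A continuous derivation from `A` into the bimodule `X`. -/
def IsDerivation (M : BanachBimod A X) (D : A →L[ℂ] X) : Prop :=
  ∀ a b, D (a * b) = M.l a (D b) + M.r b (D a)

/-- `D` is inner. -/
def Inner (M : BanachBimod A X) (D : A →L[ℂ] X) : Prop :=
  ∃ x : X, ∀ a, D a = M.l a x - M.r a x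

/-- `D` is approximately inner: some net of inner derivations converges to `D` pointwise
in norm. -/
def ApproxInner (M : BanachBimod A X) (D : A →L[ℂ] X) : Prop :=
  ∃ (ι : Type) (φ : Filter ι) (x : ι → X), φ.NeBot ∧
    ∀ a, Tendsto (fun i => M.l a (x i) - M.r a (x i)) φ (𝓝 (D a))

/-- `D` is sequentially approximately inner. -/
def SeqApproxInner (M : BanachBimod A X) (D : A →L[ℂ] X) : Prop :=
  ∃ x : ℕ → X, ∀ a, Tendsto (fun n => M.l a (x n) - M.r a (x n)) atTop (𝓝 (D a))

/-- `D` is boundedly approximately inner: the approximating net of inner derivations is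
bounded as a net of operators from `A` to `X`. -/
def BddApproxInner (M : BanachBimod A X) (D : A →L[ℂ] X) : Prop :=
  ∃ (ι : Type) (φ : Filter ι) (x : ι → X), φ.NeBot ∧
    (∃ C : ℝ, ∀ i a, ‖M.l a (x i) - M.r a (x i)‖ ≤ C * ‖a‖) ∧
    ∀ a, Tendsto (fun i => M.l a (x i) - M.r a (x i)) φ (𝓝 (D a))

/-- `D` is uniformly approximately inner: inner derivations approximate `D` uniformly
on the unit ball of `A`, i.e. in operator norm. -/
def UnifApproxInner (M : BanachBimod A X) (D : A →L[ℂ] X) : Prop :=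
  ∃ (ι : Type) (φ : Filter ι) (x : ι → X), φ.NeBot ∧
    ∀ ε > (0 : ℝ), ∀ᶠ i in φ, ∀ a, ‖D a - (M.l a (x i) - M.r a (x i))‖ ≤ ε * ‖a‖

/-- A derivation into the dual module `X →L[ℂ] ℂ` is weak* approximately inner. -/
def WeakStarApproxInner (M : BanachBimod A X) (D : A →L[ℂ] (X →L[ℂ] ℂ)) : Prop :=
  ∃ (ι : Type) (φ : Filter ι) (x : ι → (X →L[ℂ] ℂ)), φ.NeBot ∧
    ∀ (a : A) (ξ : X),
      Tendsto (fun i => (M.dual.l a (x i) - M.dual.r a (x i)) ξ) φ (𝓝 (D a ξ))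

end BanachBimod

variable (A)

/-- `A` is contractible: every continuous derivation into every Banach `A`-bimodule is inner. -/
def Contractible : Prop :=
  ∀ (X : Type) (_ : NormedAddCommGroup X) (_ : NormedSpace ℂ X) (M : BanachBimod A X)
    (D : A →L[ℂ] X), M.IsDerivation D → M.Inner D

def ApproximatelyContractible : Prop :=
  ∀ (X : Type) (_ : NormedAddCommGroup X) (_ : NormedSpace ℂ X) (M : BanachBimod A X)
    (D : A →L[ℂ] X), M.IsDerivation D → M.ApproxInner D

def SeqApproximatelyContractible : Prop :=
  ∀ (X : Type) (_ : NormedAddCommGroup X) (_ : NormedSpace ℂ X) (M : BanachBimod A X)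
    (D : A →L[ℂ] X), M.IsDerivation D → M.SeqApproxInner D

def UnifApproximatelyContractible : Prop :=
  ∀ (X : Type) (_ : NormedAddCommGroup X) (_ : NormedSpace ℂ X) (M : BanachBimod A X)
    (D : A →L[ℂ] X), M.IsDerivation D → M.UnifApproxInner D

def ApproximatelyAmenable : Prop :=
  ∀ (X : Type) (_ : NormedAddCommGroup X) (_ : NormedSpace ℂ X) (M : BanachBimod A X)
    (D : A →L[ℂ] (X →L[ℂ] ℂ)), M.dual.IsDerivation D → M.dual.ApproxInner D

def SeqApproximatelyAmenable : Prop :=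
  ∀ (X : Type) (_ : NormedAddCommGroup X) (_ : NormedSpace ℂ X) (M : BanachBimod A X)
    (D : A →L[ℂ] (X →L[ℂ] ℂ)), M.dual.IsDerivation D → M.dual.SeqApproxInner D

def BddApproximatelyAmenable : Prop :=
  ∀ (X : Type) (_ : NormedAddCommGroup X) (_ : NormedSpace ℂ X) (M : BanachBimod A X)
    (D : A →L[ℂ] (X →L[ℂ] ℂ)), M.dual.IsDerivation D → M.dual.BddApproxInner D

def WeakStarApproximatelyAmenable : Prop :=
  ∀ (X : Type) (_ : NormedAddCommGroup X) (_ : NormedSpace ℂ X) (M : BanachBimod A X)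
    (D : A →L[ℂ] (X →L[ℂ] ℂ)), M.dual.IsDerivation D → M.WeakStarApproxInner D


/-- The projective tensor "seminorm" on the algebraic tensor product `V ⊗[ℂ] W`, relative to
given (semi)norm functions on the factors: the infimum of `∑ να aₙ * νβ bₙ` over all
representations `t = ∑ aₙ ⊗ bₙ`. -/
def projTensorSN {V W : Type} [AddCommGroup V] [Module ℂ V] [AddCommGroup W] [Module ℂ W]
    (να : V → ℝ) (νβ : W → ℝ) (t : V ⊗[ℂ] W) : ℝ :=
  sInf {r : ℝ | ∃ L : List (V × W), t = (L.map fun p => p.1 ⊗ₜ[ℂ] p.2).sum ∧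
      r = (L.map fun p => να p.1 * νβ p.2).sum}

section SN

variable (C : Type) [NonUnitalRing C] [Module ℂ C] [IsScalarTower ℂ C C] [SMulCommClass ℂ C C]

/-- The left action `u ↦ a·u` of `C` on `C ⊗[ℂ] C`. -/
def tactL (a : C) : C ⊗[ℂ] C →ₗ[ℂ] C ⊗[ℂ] C :=
  TensorProduct.map (LinearMap.mulLeft ℂ a) LinearMap.id

/-- The right action `u ↦ u·a` of `C` on `C ⊗[ℂ] C`. -/
def tactR (a : C) : C ⊗[ℂ] C →ₗ[ℂ] C ⊗[ℂ] C :=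
  TensorProduct.map LinearMap.id (LinearMap.mulRight ℂ a)

/-- The multiplication map `π : C ⊗ C → C`. -/
def tpi : C ⊗[ℂ] C →ₗ[ℂ] C := LinearMap.mul' ℂ C

variable (ν : C → ℝ)

/-- Pseudo-amenability of the algebra `C` relative to the (semi)norm function `ν`:
there is an approximate diagonal, i.e. a net `(u_i) ⊂ C ⊗̂ C` with
`a·u_i − u_i·a → 0` (in the projective tensor seminorm) and `π(u_i)a → a` for all `a ∈ C`. -/
def PseudoAmenableSN : Prop :=
  ∃ (ι : Type) (φ : Filter ι) (u : ι → C ⊗[ℂ] C), φ.NeBot ∧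
    (∀ a : C, Tendsto (fun i => projTensorSN ν ν (tactL C a (u i) - tactR C a (u i))) φ (𝓝 0)) ∧
    (∀ a : C, Tendsto (fun i => ν (tpi C (u i) * a - a)) φ (𝓝 0))

/-- Sequential pseudo-amenability. -/
def SeqPseudoAmenableSN : Prop :=
  ∃ u : ℕ → C ⊗[ℂ] C,
    (∀ a : C, Tendsto (fun n => projTensorSN ν ν (tactL C a (u n) - tactR C a (u n))) atTop (𝓝 0)) ∧
    (∀ a : C, Tendsto (fun n => ν (tpi C (u n) * a - a)) atTop (𝓝 0))

/-- Pseudo-contractibility: there is a central approximate diagonal. -/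
def PseudoContractibleSN : Prop :=
  ∃ (ι : Type) (φ : Filter ι) (u : ι → C ⊗[ℂ] C), φ.NeBot ∧
    (∀ (a : C) i, tactL C a (u i) = tactR C a (u i)) ∧
    (∀ a : C, Tendsto (fun i => ν (tpi C (u i) * a - a)) φ (𝓝 0))

/-- Bounded pseudo-contractibility: a central approximate diagonal `(u_i)` such that
`(π(u_i))` is a multiplier-bounded approximate identity. -/
def BddPseudoContractibleSN : Prop :=
  ∃ (ι : Type) (φ : Filter ι) (u : ι → C ⊗[ℂ] C), φ.NeBot ∧
    (∀ (a : C) i, tactL C a (u i) = tactR C a (u i)) ∧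
    (∀ a : C, Tendsto (fun i => ν (tpi C (u i) * a - a)) φ (𝓝 0)) ∧
    (∃ K : ℝ, 0 < K ∧ ∀ i (a : C), ν (tpi C (u i) * a) ≤ K * ν a)

end SN

section Normed

variable (A : Type) [NonUnitalNormedRing A] [NormedSpace ℂ A]
  [IsScalarTower ℂ A A] [SMulCommClass ℂ A A]

def PseudoAmenable : Prop := PseudoAmenableSN A (fun a => ‖a‖)
def SeqPseudoAmenable : Prop := SeqPseudoAmenableSN A (fun a => ‖a‖)
def PseudoContractible : Prop := PseudoContractibleSN A (fun a => ‖a‖)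
def BddPseudoContractible : Prop := BddPseudoContractibleSN A (fun a => ‖a‖)

/-- `A` has a (two-sided) approximate identity. -/
def HasApproxIdentity : Prop :=
  ∃ (ι : Type) (φ : Filter ι) (e : ι → A), φ.NeBot ∧
    ∀ a : A, Tendsto (fun i => e i * a) φ (𝓝 a) ∧ Tendsto (fun i => a * e i) φ (𝓝 a)

/-- `A` has a bounded (two-sided) approximate identity. -/
def HasBoundedApproxIdentity : Prop :=
  ∃ (ι : Type) (φ : Filter ι) (e : ι → A), φ.NeBot ∧ (∃ C : ℝ, ∀ i, ‖e i‖ ≤ C) ∧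
    ∀ a : A, Tendsto (fun i => e i * a) φ (𝓝 a) ∧ Tendsto (fun i => a * e i) φ (𝓝 a)

/-- `A` has a left approximate identity. -/
def HasLeftApproxIdentity : Prop :=
  ∃ (ι : Type) (φ : Filter ι) (e : ι → A), φ.NeBot ∧
    ∀ a : A, Tendsto (fun i => e i * a) φ (𝓝 a)

/-- `A` has a right approximate identity. -/
def HasRightApproxIdentity : Prop :=
  ∃ (ι : Type) (φ : Filter ι) (e : ι → A), φ.NeBot ∧
    ∀ a : A, Tendsto (fun i => a * e i) φ (𝓝 a)

/-- `A` has a central approximate identity. -/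
def HasCentralApproxIdentity : Prop :=
  ∃ (ι : Type) (φ : Filter ι) (e : ι → A), φ.NeBot ∧
    (∀ (a : A) i, a * e i = e i * a) ∧
    ∀ a : A, Tendsto (fun i => e i * a) φ (𝓝 a)

/-- `A` is approximately biprojective: there is a net `(T_α)` of bounded `A`-bimodule morphisms
`A → A ⊗̂ A` with `π ∘ T_α (a) → a` for every `a`. -/
def ApproxBiprojective : Prop :=
  ∃ (ι : Type) (φ : Filter ι) (T : ι → (A →ₗ[ℂ] A ⊗[ℂ] A)), φ.NeBot ∧
    (∀ i, ∃ C : ℝ, ∀ a, projTensorSN (fun x : A => ‖x‖) (fun x : A => ‖x‖) (T i a) ≤ C * ‖a‖) ∧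
    (∀ i (a b : A), T i (a * b) = tactL A a (T i b) ∧ T i (a * b) = tactR A b (T i a)) ∧
    (∀ a : A, Tendsto (fun i => tpi A (T i a)) φ (𝓝 a))

end Normed


end

/-!
Let `D : A → X` be a derivation. If `A` is approximately amenable, `D`, viewed as a derivation into
the bidual of `X`, is a pointwise limit of inner derivations induced by a net `ξ` in the bidual.
A functional `f` on the product `A → X` depends on finitely many coordinates, so if it vanishes on
all inner derivations `a ↦ a·x - x·a` with `x ∈ X`, then its bitranspose vanishes on those induced
by `ξ`, and in the limit `f D = 0`. By Hahn–Banach in the locally convex space `A → X`, `D` is a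
pointwise norm limit of inner derivations induced by elements of `X`.
-/

theorem mem_topologicalClosure_of_forall_strongDual {𝕜 E : Type*} [RCLike 𝕜]
    [AddCommGroup E] [TopologicalSpace E] [IsTopologicalAddGroup E] [Module 𝕜 E]
    [ContinuousSMul 𝕜 E] [Module ℝ E] [IsScalarTower ℝ 𝕜 E] [LocallyConvexSpace ℝ E]
    {p : Submodule 𝕜 E} {y : E}
    (h : ∀ f : StrongDual 𝕜 E, (∀ x ∈ p, f x = 0) → f y = 0) : y ∈ p.topologicalClosure := by
  by_contra hy
  obtain ⟨f, u, hfp, hfy⟩ := RCLike.geometric_hahn_banach_closed_point (𝕜 := 𝕜)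
    ((p.topologicalClosure.restrictScalars ℝ).convex) p.isClosed_topologicalClosure hy
  have f_lt {x : E} (hx : x ∈ p) : RCLike.re (f x) < u := hfp x (p.le_topologicalClosure hx)
  have f_eq_zero {x : E} (hx : x ∈ p) : f x = 0 := by
    by_contra hfx
    -- A multiple of `x` on which `f` takes the forbidden value `u`.
    have := f_lt (p.smul_mem ((u : 𝕜) / f x) hx)
    simp [hfx] at this
  have u_pos : 0 < u := by simpa using f_lt p.zero_mem
  have u_neg : u < 0 := by simpa [h f fun _ => f_eq_zero] using hfy
  exact u_pos.not_gt u_neg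

theorem exists_finset_forall_apply_eq_sum_single {𝕜 ι : Type*} {Y : ι → Type*} [NormedField 𝕜]
    [∀ i, AddCommGroup (Y i)] [∀ i, Module 𝕜 (Y i)] [∀ i, TopologicalSpace (Y i)]
    [DecidableEq ι] (f : StrongDual 𝕜 (Π i, Y i)) :
    ∃ s : Finset ι, ∀ y, f y = ∑ i ∈ s, f (Pi.single i (y i)) := by
  obtain ⟨s, t, ht, hst⟩ : ∃ (s : Finset ι) (t : Π i, Set (Y i)),
      (∀ i, t i ∈ 𝓝 0) ∧ (s : Set ι).pi t ⊆ f ⁻¹' Metric.ball 0 1 := by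
    have hball : f ⁻¹' Metric.ball 0 1 ∈ 𝓝 0 :=
      f.continuous.tendsto' 0 0 (map_zero f) (Metric.ball_mem_nhds 0 one_pos)
    rwa [nhds_pi, Filter.mem_pi, Set.exists_finite_iff_finset] at hball
  have eq_zero_of_vanish (z : Π i, Y i) (hz : ∀ i ∈ s, z i = 0) : f z = 0 := by
    by_contra hfz
    have hmem : (f z)⁻¹ • z ∈ (s : Set ι).pi t := fun i hi => by
      simpa [hz i hi] using mem_of_mem_nhds (ht i)
    simpa [hfz] using hst hmem
  refine ⟨s, fun y => ?_⟩
  rw [← map_sum, ← sub_eq_zero, ← map_sub]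
  refine eq_zero_of_vanish _ fun i hi => ?_
  simp [Finset.sum_apply, Finset.sum_pi_single, hi]

/-- `ξ` stands for a net in the bidual of `X` which the bitranspose of each `T i` sends to a net
converging weak-* to `y i`. -/
theorem mem_closure_range_pi_of_tendsto_bidual {𝕜 ι X : Type*} {Y : ι → Type*} [RCLike 𝕜]
    [AddCommGroup X] [Module 𝕜 X] [TopologicalSpace X]
    [∀ i, AddCommGroup (Y i)] [∀ i, Module 𝕜 (Y i)] [∀ i, TopologicalSpace (Y i)]
    [∀ i, IsTopologicalAddGroup (Y i)] [∀ i, ContinuousSMul 𝕜 (Y i)] [∀ i, Module ℝ (Y i)]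
    [∀ i, IsScalarTower ℝ 𝕜 (Y i)] [∀ i, LocallyConvexSpace ℝ (Y i)]
    (T : Π i, X →L[𝕜] Y i) (y : Π i, Y i) {J : Type*} {φ : Filter J} [φ.NeBot]
    (ξ : J → Module.Dual 𝕜 (StrongDual 𝕜 X))
    (hξ : ∀ i (g : StrongDual 𝕜 (Y i)), Tendsto (fun j => ξ j (g ∘L T i)) φ (𝓝 (g (y i)))) :
    y ∈ closure (Set.range fun x i => T i x) := by
  classical
  let S : X →L[𝕜] Π i, Y i := ContinuousLinearMap.pi T
  suffices y ∈ (LinearMap.range S.toLinearMap).topologicalClosure from this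
  refine mem_topologicalClosure_of_forall_strongDual fun f hf => ?_
  obtain ⟨s, hs⟩ := exists_finset_forall_apply_eq_sum_single f
  let g (i : ι) : StrongDual 𝕜 (Y i) := f ∘L ContinuousLinearMap.single 𝕜 Y i
  have sum_transpose_eq_zero : ∑ i ∈ s, g i ∘L T i = 0 := by
    ext x
    simpa [g, S] using (hs (S x)).symm.trans (hf (S x) ⟨x, rfl⟩)
  have tendsto_apply : Tendsto (fun _ : J => (0 : 𝕜)) φ (𝓝 (f y)) := by
    have hsum := tendsto_finsetSum s fun i _ => hξ i (g i)
    simp only [← map_sum, sum_transpose_eq_zero, map_zero] at hsum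
    rwa [hs y]
  exact tendsto_nhds_unique tendsto_apply tendsto_const_nhds

namespace BanachBimod

variable {A X : Type} [NonUnitalNormedRing A] [NormedSpace ℂ A] [NormedAddCommGroup X]
  [NormedSpace ℂ X] {M : BanachBimod A X} {D : A →L[ℂ] X}

theorem approxInner_iff_mem_closure_range :
    M.ApproxInner D ↔ ⇑D ∈ closure (Set.range fun (x : X) (a : A) => M.l a x - M.r a x) := by
  constructor
  · rintro ⟨J, φ, x, _, hx⟩
    exact mem_closure_of_tendsto (tendsto_pi_nhds.2 hx) (.of_forall fun j => ⟨x j, rfl⟩)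
  · intro hD
    refine ⟨X, comap (fun x a => M.l a x - M.r a x) (𝓝 ⇑D), id, ?_, ?_⟩
    · exact comap_neBot_iff_frequently.2 (mem_closure_iff_frequently.1 hD)
    · exact tendsto_pi_nhds.1 tendsto_comap

theorem IsDerivation.inclusionInDoubleDual_comp (hD : M.IsDerivation D) :
    M.dual.dual.IsDerivation (NormedSpace.inclusionInDoubleDual ℂ X ∘L D) := by
  intro a b
  ext f
  simp [dual, hD a b]

theorem ApproxInner.of_inclusionInDoubleDual_comp
    (h : M.dual.dual.ApproxInner (NormedSpace.inclusionInDoubleDual ℂ X ∘L D)) :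
    M.ApproxInner D := by
  obtain ⟨J, φ, ξ, _, hξ⟩ := h
  refine approxInner_iff_mem_closure_range.2 <|
    mem_closure_range_pi_of_tendsto_bidual (fun a => M.l a - M.r a) D (fun j => (ξ j).toLinearMap)
      (φ := φ) fun a g => ?_
  have tendsto_apply := ((ContinuousLinearMap.apply ℂ ℂ g).continuous.tendsto _).comp (hξ a)
  simpa [dual, Function.comp_def, ContinuousLinearMap.comp_sub] using tendsto_apply

end BanachBimod

theorem approxContractible_iff_approxAmenable_general
    (A : Type) [NonUnitalNormedRing A] [NormedSpace ℂ A] :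
    ApproximatelyContractible A ↔ ApproximatelyAmenable A :=
  ⟨fun h _ _ _ M D hD => h _ _ _ M.dual D hD, fun h _ _ _ M _ hD =>
    .of_inclusionInDoubleDual_comp (h _ _ _ M.dual _ hD.inclusionInDoubleDual_comp)⟩

/-- A Banach algebra `A` is approximately contractible if and only if it is
approximately amenable. -/
theorem approxContractible_iff_approxAmenable
    (A : Type) [NonUnitalNormedRing A] [NormedSpace ℂ A]
    [IsScalarTower ℂ A A] [SMulCommClass ℂ A A] [CompleteSpace A] :
    ApproximatelyContractible A ↔ ApproximatelyAmenable A :=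
  approxContractible_iff_approxAmenable_general A
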